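/- arXiv:math/0303237 — 4 statements merged into one kernel-verified Lean document; each statement's English description precedes it below -/
import Mathlib

section
/- Assume in addition that E carries a second norm ‖·‖_w and that there are constants σ > 0 and B ≥ 0 such that ‖L_t f‖_w ≤ ‖f‖_w and ‖L_t f‖ ≤ 3 e^{−σ t} ‖f‖ + B ‖f‖_w for all t ≥ 0 and f ∈ E. Then for every z ∈ ℂ with Re z = a > 0, every integer n ≥ 1 and every f ∈ E one has ‖R(z)^n f‖ ≤ 3 (a+σ)^{−n} ‖f‖ + a^{−n} B ‖f‖_w. -/
open MeasureTheory

/-- Lemma 2.7, third inequality: if in addition `E` carries a second (weak) norm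
`nw` with `nw (L_t f) ≤ nw f` and the Lasota–Yorke inequality
`‖L_t f‖ ≤ 3 e^{-σ t} ‖f‖ + B nw f` holds, then
`‖R(z)^n f‖ ≤ 3 (a+σ)^{-n} ‖f‖ + a^{-n} B nw f` for `a = Re z > 0`. -/
theorem stmt3 {E : Type*} [NormedAddCommGroup E] [NormedSpace ℂ E] [CompleteSpace E]
    (L : ℝ → E →L[ℂ] E)
    (hL0 : L 0 = ContinuousLinearMap.id ℂ E)
    (hLadd : ∀ t s : ℝ, 0 ≤ t → 0 ≤ s → L (t + s) = (L t).comp (L s))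
    (hLcont : ∀ f : E, ContinuousOn (fun t : ℝ => L t f) (Set.Ici 0))
    (hLbdd : ∀ t : ℝ, 0 ≤ t → ∀ f : E, ‖L t f‖ ≤ ‖f‖)
    (nw : E → ℝ)
    (hnw0 : ∀ f : E, 0 ≤ nw f)
    (hnwadd : ∀ f g : E, nw (f + g) ≤ nw f + nw g)
    (hnwsmul : ∀ (c : ℂ) (f : E), nw (c • f) = ‖c‖ * nw f)
    (σ B : ℝ) (hσ : 0 < σ) (hB : 0 ≤ B)
    (hLw : ∀ t : ℝ, 0 ≤ t → ∀ f : E, nw (L t f) ≤ nw f)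
    (hLY : ∀ t : ℝ, 0 ≤ t → ∀ f : E,
      ‖L t f‖ ≤ 3 * Real.exp (-σ * t) * ‖f‖ + B * nw f)
    (z : ℂ) (hz : 0 < z.re)
    (R : E → E)
    (hR : ∀ g : E, R g = ∫ t in Set.Ici (0 : ℝ), Complex.exp (-z * t) • L t g)
    (n : ℕ) (hn : 1 ≤ n) (f : E) :
    ‖R^[n] f‖ ≤ 3 * ((z.re + σ) ^ n)⁻¹ * ‖f‖ + ((z.re) ^ n)⁻¹ * B * nw f := by
  have hexp : ∀ c : ℝ, 0 < c → IntegrableOn (fun t : ℝ => Real.exp (-c * t)) (Set.Ici 0) := by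
    intro c hc
    rw [integrableOn_Ici_iff_integrableOn_Ioi]
    exact integrableOn_exp_mul_Ioi (by linarith) 0
  have hexpv : ∀ c : ℝ, 0 < c → ∫ t in Set.Ici (0 : ℝ), Real.exp (-c * t) = c⁻¹ := by
    intro c hc
    rw [integral_Ici_eq_integral_Ioi, integral_exp_mul_Ioi (by linarith) 0]
    simp [neg_div_neg_eq]
  have hnorm : ∀ t : ℝ, ‖Complex.exp (-z * t)‖ = Real.exp (-z.re * t) := by
    intro t
    rw [Complex.norm_exp]
    simp
  have hint : ∀ g : E, IntegrableOn (fun t : ℝ => Complex.exp (-z * t) • L t g) (Set.Ici 0) := by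
    intro g
    refine Integrable.mono' ((hexp z.re hz).mul_const ‖g‖) ?_ ?_
    · refine ContinuousOn.aestronglyMeasurable ?_ measurableSet_Ici
      exact (Continuous.continuousOn (by fun_prop)).smul (hLcont g)
    · filter_upwards [ae_restrict_mem measurableSet_Ici] with t ht
      rw [norm_smul, hnorm]
      exact mul_le_mul_of_nonneg_left (hLbdd t ht g) (Real.exp_pos _).le
  have key : ∀ m : ℕ, ∀ t : ℝ, 0 ≤ t → ‖L t (R^[m] f)‖ ≤
      3 * Real.exp (-σ * t) * ((z.re + σ) ^ m)⁻¹ * ‖f‖ + ((z.re) ^ m)⁻¹ * B * nw f := by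
    intro m
    induction m with
    | zero =>
      intro t ht
      simpa using hLY t ht f
    | succ m ih =>
      intro t ht
      rw [Function.iterate_succ_apply', hR, ← ContinuousLinearMap.integral_comp_comm _ (hint _)]
      set C₁ : ℝ := 3 * Real.exp (-σ * t) * ((z.re + σ) ^ m)⁻¹ * ‖f‖ with hC₁
      set C₂ : ℝ := ((z.re) ^ m)⁻¹ * B * nw f with hC₂
      have i1 := (hexp (z.re + σ) (by linarith)).mul_const C₁
      have i2 := (hexp z.re hz).mul_const C₂
      have hb : ‖∫ s in Set.Ici (0 : ℝ), L t (Complex.exp (-z * s) • L s (R^[m] f))‖ ≤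
          ∫ s in Set.Ici (0 : ℝ), (Real.exp (-(z.re + σ) * s) * C₁ + Real.exp (-z.re * s) * C₂) := by
        refine norm_integral_le_of_norm_le (i1.add i2) ?_
        filter_upwards [ae_restrict_mem measurableSet_Ici] with s hs
        have hs' : 0 ≤ s := hs
        rw [map_smul, norm_smul, hnorm, ← ContinuousLinearMap.comp_apply, ← hLadd t s ht hs']
        refine (mul_le_mul_of_nonneg_left (ih (t + s) (by linarith)) (Real.exp_pos _).le).trans
          (le_of_eq ?_)
        rw [hC₁, hC₂, show -σ * (t + s) = -σ * t + -σ * s by ring,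
          show -(z.re + σ) * s = -z.re * s + -σ * s by ring, Real.exp_add, Real.exp_add]
        ring
      refine hb.trans (le_of_eq ?_)
      rw [integral_add i1 i2, integral_mul_const, integral_mul_const,
        hexpv _ hz, hexpv _ (by linarith), hC₁, hC₂, pow_succ, pow_succ, mul_inv, mul_inv]
      ring
  have := key n 0 le_rfl
  simpa [hL0] using this
end

section
/- Let E be a complex vector space equipped with two norms ‖·‖ and ‖·‖_w, and let (L_t)_{t≥0} be a one-parameter semigroup of linear operators on E (L_0 = Id, L_{t+s} = L_t ∘ L_s) such that ‖L_t f‖_w ≤ ‖f‖_w for all t ≥ 0 and f ∈ E. Suppose there exist T_0 > 0, σ > 0 and K ≥ 0 such that ‖L_t f‖ ≤ 3 e^{−σ t} ‖f‖ + K ‖f‖_w for all t ∈ [0, T_0] and f ∈ E, and moreover ‖L_{T_0} f‖ ≤ e^{−σ T_0} ‖f‖ + K ‖f‖_w for all f ∈ E. Then, with B := 4K (1 − e^{−σ T_0})^{−1}, one has ‖L_t f‖ ≤ 3 e^{−σ t} ‖f‖ + B ‖f‖_w for all t ≥ 0 and all f ∈ E. -/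
/-- The iteration step (equations (3.4)–(3.5)) in the proof of Lemma 2.5: a
short-time two-norm Lasota–Yorke inequality together with a strict contraction
at a single time `T₀` upgrades to a uniform-in-time Lasota–Yorke inequality,
with `B = 4K (1 - e^{-σ T₀})⁻¹`. -/
theorem stmt4 {E : Type*} [AddCommGroup E] [Module ℂ E]
    (nn nw : E → ℝ)
    (hnn0 : ∀ f : E, 0 ≤ nn f)
    (hnnadd : ∀ f g : E, nn (f + g) ≤ nn f + nn g)
    (hnnsmul : ∀ (c : ℂ) (f : E), nn (c • f) = ‖c‖ * nn f)
    (hnw0 : ∀ f : E, 0 ≤ nw f)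
    (hnwadd : ∀ f g : E, nw (f + g) ≤ nw f + nw g)
    (hnwsmul : ∀ (c : ℂ) (f : E), nw (c • f) = ‖c‖ * nw f)
    (L : ℝ → E →ₗ[ℂ] E)
    (hL0 : L 0 = LinearMap.id)
    (hLadd : ∀ t s : ℝ, 0 ≤ t → 0 ≤ s → ∀ f : E, L (t + s) f = L t (L s f))
    (hLw : ∀ t : ℝ, 0 ≤ t → ∀ f : E, nw (L t f) ≤ nw f)
    (T₀ σ K : ℝ) (hT₀ : 0 < T₀) (hσ : 0 < σ) (hK : 0 ≤ K)
    (hshort : ∀ t ∈ Set.Icc (0 : ℝ) T₀, ∀ f : E,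
      nn (L t f) ≤ 3 * Real.exp (-σ * t) * nn f + K * nw f)
    (hT₀c : ∀ f : E, nn (L T₀ f) ≤ Real.exp (-σ * T₀) * nn f + K * nw f) :
    ∀ t : ℝ, 0 ≤ t → ∀ f : E,
      nn (L t f) ≤ 3 * Real.exp (-σ * t) * nn f
        + (4 * K * (1 - Real.exp (-σ * T₀))⁻¹) * nw f := by
  have hq1 : Real.exp (-σ * T₀) < 1 := by
    rw [Real.exp_lt_one_iff]
    nlinarith [mul_pos hσ hT₀]
  have hq0 : 0 < Real.exp (-σ * T₀) := Real.exp_pos _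
  obtain ⟨C, hC⟩ : ∃ C, C = K * (1 - Real.exp (-σ * T₀))⁻¹ := ⟨_, rfl⟩
  have hCeq : Real.exp (-σ * T₀) * C + K = C := by
    have h : 1 - Real.exp (-σ * T₀) ≠ 0 := by linarith
    have h' : C * (1 - Real.exp (-σ * T₀)) = K := by
      rw [hC, mul_assoc, inv_mul_cancel₀ h, mul_one]
    linarith
  have hC0 : 0 ≤ C := by
    rw [hC]
    exact mul_nonneg hK (inv_nonneg.mpr (by linarith))
  have hKC : K ≤ C := by nlinarith [mul_nonneg hq0.le hC0]
  have key : ∀ n : ℕ, ∀ t : ℝ, 0 ≤ t → t ≤ n * T₀ → ∀ f : E,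
      nn (L t f) ≤ 3 * Real.exp (-σ * t) * nn f + C * nw f := by
    intro n
    induction n with
    | zero =>
      intro t ht ht' f
      have h1 := hshort t ⟨ht, by simp at ht'; linarith⟩ f
      nlinarith [mul_le_mul_of_nonneg_right hKC (hnw0 f)]
    | succ n ih =>
      intro t ht ht' f
      rcases le_total t T₀ with h | h
      · have h1 := hshort t ⟨ht, h⟩ f
        nlinarith [mul_le_mul_of_nonneg_right hKC (hnw0 f)]
      · have hs : 0 ≤ t - T₀ := by linarith
        have h1 := ih (t - T₀) hs (by push_cast at ht'; linarith) f
        have h2 := hT₀c (L (t - T₀) f)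
        rw [← hLadd T₀ (t - T₀) hT₀.le hs f, add_sub_cancel] at h2
        have h3 := mul_le_mul_of_nonneg_left (hLw (t - T₀) hs f) hK
        have h4 := mul_le_mul_of_nonneg_left h1 hq0.le
        have h5 : Real.exp (-σ * t) = Real.exp (-σ * T₀) * Real.exp (-σ * (t - T₀)) := by
          rw [← Real.exp_add]
          congr 1
          ring
        calc nn (L t f) ≤ Real.exp (-σ * T₀) *
              (3 * Real.exp (-σ * (t - T₀)) * nn f + C * nw f) + K * nw f := by linarith
          _ = 3 * Real.exp (-σ * t) * nn f + (Real.exp (-σ * T₀) * C + K) * nw f := by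
              rw [h5]
              ring
          _ = _ := by rw [hCeq]
  intro t ht f
  obtain ⟨n, hn⟩ := exists_nat_ge (t / T₀)
  have h1 := key n t ht ((div_le_iff₀ hT₀).mp hn) f
  have h2 : 4 * K * (1 - Real.exp (-σ * T₀))⁻¹ = 4 * C := by
    rw [hC]
    ring
  rw [h2]
  nlinarith [mul_nonneg hC0 (hnw0 f)]
end

section
/- Let V be a complex vector space equipped with two norms ‖·‖ and ‖·‖_w satisfying ‖f‖_w ≤ ‖f‖ for all f ∈ V, and let Q : V → V be a linear map. Let a, σ > 0 and B ≥ 0 be constants such that ‖Q f‖ ≤ a^{−1} ‖f‖ for all f, and ‖Q^m f‖ ≤ 3 (a+σ)^{−m} ‖f‖ + B a^{−m} ‖f‖_w for all integers m ≥ 1 and all f ∈ V. Assume that the image {Q f : ‖f‖ ≤ 1} of the unit ball is totally bounded with respect to ‖·‖_w. Then, with C := (6+B)(a+σ)/a, for every integer n ≥ 1 there exists a finite set F ⊆ V such that Q^n({f ∈ V : ‖f‖ ≤ 1}) ⊆ ⋃_{g∈F} {f ∈ V : ‖f − g‖ ≤ C (a+σ)^{−n}}. -/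
/-- The Hennion–Nussbaum covering argument of Proposition 2.9: if `Q` satisfies a
two-norm resolvent inequality and maps the strong unit ball to a `‖·‖_w`-totally
bounded set, then the images of the unit ball under the powers `Q^n` can be
covered by finitely many strong-norm balls of radius `C (a+σ)^{-n}` with
`C = (6+B)(a+σ)/a`. -/
theorem stmt5 {V : Type*} [AddCommGroup V] [Module ℂ V]
    (nn nw : V → ℝ)
    (hnn0 : ∀ f : V, 0 ≤ nn f)
    (hnnadd : ∀ f g : V, nn (f + g) ≤ nn f + nn g)
    (hnnsmul : ∀ (c : ℂ) (f : V), nn (c • f) = ‖c‖ * nn f)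
    (hnw0 : ∀ f : V, 0 ≤ nw f)
    (hnwadd : ∀ f g : V, nw (f + g) ≤ nw f + nw g)
    (hnwsmul : ∀ (c : ℂ) (f : V), nw (c • f) = ‖c‖ * nw f)
    (hle : ∀ f : V, nw f ≤ nn f)
    (Q : V →ₗ[ℂ] V)
    (a σ B : ℝ) (ha : 0 < a) (hσ : 0 < σ) (hB : 0 ≤ B)
    (hQ1 : ∀ f : V, nn (Q f) ≤ a⁻¹ * nn f)
    (hQm : ∀ m : ℕ, 1 ≤ m → ∀ f : V,
      nn ((Q ^ m) f) ≤ 3 * ((a + σ) ^ m)⁻¹ * nn f + B * (a ^ m)⁻¹ * nw f)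
    (htb : ∀ ε : ℝ, 0 < ε → ∃ F : Finset V,
      ∀ f : V, nn f ≤ 1 → ∃ g ∈ F, nw (Q f - g) ≤ ε) :
    ∀ n : ℕ, 1 ≤ n → ∃ F : Finset V,
      ∀ f : V, nn f ≤ 1 → ∃ g ∈ F,
        nn ((Q ^ n) f - g) ≤ (6 + B) * (a + σ) / a * ((a + σ) ^ n)⁻¹ := by
  classical
  have nneg : ∀ f g : V, nn (f - g) ≤ nn f + nn g := by
    intro f g
    have h1 := hnnadd f ((-1 : ℂ) • g)
    rw [hnnsmul] at h1
    simpa [sub_eq_add_neg] using h1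
  have wsymm : ∀ f : V, nw (-f) = nw f := by
    intro f
    have h1 := hnwsmul (-1) f
    simpa using h1
  intro n hn
  obtain ⟨m, rfl⟩ : ∃ m, n = m + 1 := ⟨n - 1, by omega⟩
  have hs : 0 < a + σ := by positivity
  have hC : (6 + B) * (a + σ) / a * ((a + σ) ^ (m + 1))⁻¹
      = (6 + B) * a⁻¹ * ((a + σ) ^ m)⁻¹ := by
    rw [pow_succ]
    field_simp
  rw [hC]
  have hai : 0 < a⁻¹ := inv_pos.mpr ha
  rcases Nat.eq_zero_or_pos m with rfl | hm
  · refine ⟨{0}, fun f hf => ⟨0, by simp, ?_⟩⟩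
    have h1 := hQ1 f
    have h2 : a⁻¹ * nn f ≤ a⁻¹ * 1 := mul_le_mul_of_nonneg_left hf hai.le
    have h3 : 0 ≤ B * a⁻¹ := by positivity
    simp only [zero_add, pow_one, sub_zero, pow_zero, inv_one, mul_one] at *
    nlinarith
  · obtain ⟨ε, hε⟩ : ∃ ε, ε = a ^ m * ((a + σ) ^ m)⁻¹ * a⁻¹ / 2 := ⟨_, rfl⟩
    have hεp : 0 < ε := by rw [hε]; positivity
    obtain ⟨F, hF⟩ := htb ε hεp
    have hr : ∀ g : V, ∃ r : V, (∃ f, nn f ≤ 1 ∧ nw (Q f - g) ≤ ε) →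
        nn r ≤ 1 ∧ nw (Q r - g) ≤ ε := by
      intro g
      by_cases h : ∃ f, nn f ≤ 1 ∧ nw (Q f - g) ≤ ε
      · obtain ⟨f, hf⟩ := h
        exact ⟨f, fun _ => hf⟩
      · exact ⟨0, fun h' => absurd h' h⟩
    choose r hr using hr
    refine ⟨F.image (fun g => (Q ^ (m + 1)) (r g)), fun f hf => ?_⟩
    obtain ⟨g, hg, hfg⟩ := hF f hf
    obtain ⟨hr1, hr2⟩ := hr g ⟨f, hf, hfg⟩
    refine ⟨_, Finset.mem_image_of_mem _ hg, ?_⟩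
    have e : (Q ^ (m + 1)) f - (Q ^ (m + 1)) (r g) = (Q ^ m) (Q (f - r g)) := by
      rw [pow_succ, ← map_sub]
      rfl
    rw [e]
    have hw : nw (Q (f - r g)) ≤ 2 * ε := by
      have h1 := hnwadd (Q f - g) (-(Q (r g) - g))
      rw [wsymm] at h1
      have e2 : Q (f - r g) = Q f - g + -(Q (r g) - g) := by
        rw [map_sub]; abel
      rw [e2]; linarith
    have hnq : nn (Q (f - r g)) ≤ 2 * a⁻¹ := by
      have h1 := hQ1 (f - r g)
      have h2 := nneg f (r g)
      have h3 : a⁻¹ * nn (f - r g) ≤ a⁻¹ * 2 :=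
        mul_le_mul_of_nonneg_left (by linarith) hai.le
      linarith
    calc nn ((Q ^ m) (Q (f - r g)))
        ≤ 3 * ((a + σ) ^ m)⁻¹ * nn (Q (f - r g)) + B * (a ^ m)⁻¹ * nw (Q (f - r g)) :=
          hQm m hm _
      _ ≤ 3 * ((a + σ) ^ m)⁻¹ * (2 * a⁻¹) + B * (a ^ m)⁻¹ * (2 * ε) := by gcongr
      _ = (6 + B) * a⁻¹ * ((a + σ) ^ m)⁻¹ := by
          rw [hε]
          field_simp
          ring
end

section
/- Let E be a complex Banach space, D ⊆ E a linear subspace, X : D → E a linear map, z ∈ ℂ with z ≠ 0, and R : E → E a bounded linear operator such that R(z g − X g) = g for every g ∈ D. Then for every f ∈ D with X f ∈ D one has ‖R f − z^{−1} f − z^{−2} X f‖ ≤ |z|^{−2} ‖R‖ ‖X(X f)‖, where ‖R‖ denotes the operator norm of R. -/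
/-- Lemma 2.12: if `R` is a bounded operator with `R (z g - X g) = g` for every
`g` in the domain `D` of the (abstract) generator `X`, then for `f ∈ D` with
`X f ∈ D` one has `‖R f - z⁻¹ f - z⁻² X f‖ ≤ |z|⁻² ‖R‖ ‖X² f‖`. -/
theorem stmt6 {E : Type*} [NormedAddCommGroup E] [NormedSpace ℂ E]
    (D : Submodule ℂ E) (X : D →ₗ[ℂ] E)
    (z : ℂ) (hz : z ≠ 0)
    (R : E →L[ℂ] E)
    (hR : ∀ g : D, R (z • (g : E) - X g) = (g : E))
    (f : D) (hf : X f ∈ D) :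
    ‖R (f : E) - z⁻¹ • (f : E) - (z ^ 2)⁻¹ • X f‖ ≤
      (‖z‖ ^ 2)⁻¹ * ‖R‖ * ‖X (⟨X f, hf⟩ : D)‖ := by
  have h1 := hR f
  have h2 := hR ⟨X f, hf⟩
  simp only [map_sub, map_smul] at h1 h2
  have key : R (f : E) - z⁻¹ • (f : E) - (z ^ 2)⁻¹ • X f
      = (z ^ 2)⁻¹ • R (X (⟨X f, hf⟩ : D)) := by
    generalize R (X (⟨X f, hf⟩ : D)) = c at *
    rw [← h2]
    nth_rewrite 2 [← h1]
    have e1 : z⁻¹ * z = 1 := inv_mul_cancel₀ hz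
    have e2 : (z ^ 2)⁻¹ * z = z⁻¹ := by field_simp
    simp only [smul_sub, smul_smul, e1, e2, one_smul]
    abel
  rw [key, norm_smul, norm_inv, norm_pow, mul_assoc]
  gcongr
  exact R.le_opNorm _
end
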